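/- (Forward direction of Theorem 1.) If the community partition 𝒞 is fair, i.e. |C_u ∩ P_w| / |C_u| = |P_w| / n for every u and w, then its fairness-modularity Q^P equals 0. -/

import Mathlib

/-!
Write `c u` for the vector of intersection sizes `#(C u ∩ P w)` and `p` for the vector of group
sizes `#(P w)`. Since `2 m^P = ‖p‖²`, the fairness-modularity is `(2 m^P)⁻²` times the sum over `u`
of the Cauchy–Schwarz defects `‖c u‖² ‖p‖² - ⟨c u, p⟩²`. Fairness makes every `c u` a multiple of
`p`, so every defect vanishes.
-/

open Finset

theorem sum_mul_sq_eq_sum_sq_mul_sum_sq_of_eq_mul {ι R : Type*} [CommSemiring R]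
    {s : Finset ι} {x y : ι → R} {a : R} (h : ∀ i ∈ s, x i = a * y i) :
    (∑ i ∈ s, x i * y i) ^ 2 = (∑ i ∈ s, x i ^ 2) * ∑ i ∈ s, y i ^ 2 := by
  have inner_eq : ∑ i ∈ s, x i * y i = a * ∑ i ∈ s, y i ^ 2 := by
    rw [mul_sum]
    exact sum_congr rfl fun i hi ↦ by rw [h i hi]; ring
  have norm_sq_eq : ∑ i ∈ s, x i ^ 2 = a ^ 2 * ∑ i ∈ s, y i ^ 2 := by
    rw [mul_sum]
    exact sum_congr rfl fun i hi ↦ by rw [h i hi, mul_pow]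
  rw [inner_eq, norm_sq_eq]
  ring

section Fairness

variable {V ι κ : Type*} [Fintype V] [DecidableEq V]

/-- The communities `C` are fair with respect to the protected groups `P`: each group has the same
share in each community as in the whole vertex set. -/
def IsFair (C : ι → Finset V) (P : κ → Finset V) : Prop :=
  ∀ u w, (#(C u ∩ P w) : ℝ) / (#(C u) : ℝ) = (#(P w) : ℝ) / (Fintype.card V : ℝ)

theorem IsFair.card_inter_eq_mul {C : ι → Finset V} {P : κ → Finset V}
    (hfair : IsFair C P) {u : ι} (hu : (C u).Nonempty) (w : κ) :
    (#(C u ∩ P w) : ℝ) = (#(C u) : ℝ) / (Fintype.card V : ℝ) * (#(P w) : ℝ) := by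
  have hcard : (#(C u) : ℝ) ≠ 0 := by exact_mod_cast hu.card_ne_zero
  rw [(div_eq_iff hcard).mp (hfair u w), div_mul_comm]

end Fairness

section FairnessModularity

variable {V ι κ : Type*} [Fintype κ]

/-- The quantity `m^P`: the total edge weight of the protected graph, which joins any two vertices
of a common group, each vertex being joined to itself as well. -/
noncomputable def protectedEdgeWeight (P : κ → Finset V) : ℝ :=
  (1 / 2) * ∑ w, (#(P w) : ℝ) ^ 2

theorem two_mul_protectedEdgeWeight (P : κ → Finset V) :
    2 * protectedEdgeWeight P = ∑ w, (#(P w) : ℝ) ^ 2 := by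
  rw [protectedEdgeWeight]
  ring

theorem protectedEdgeWeight_pos {P : κ → Finset V} (hP : ∃ w, (P w).Nonempty) :
    0 < protectedEdgeWeight P := by
  obtain ⟨w, hw⟩ := hP
  have hcard : (0 : ℝ) < #(P w) := by exact_mod_cast hw.card_pos
  have hsum : 0 < ∑ w, (#(P w) : ℝ) ^ 2 :=
    sum_pos' (fun _ _ ↦ sq_nonneg _) ⟨w, mem_univ w, pow_pos hcard 2⟩
  exact mul_pos one_half_pos hsum

variable [DecidableEq V]

/-- The fairness-modularity `Q^P` of the communities `C` with respect to the protected groups `P`.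
It is defined for arbitrary families of finite sets, so communities and groups may overlap. -/
noncomputable def fairnessModularity [Fintype ι] (C : ι → Finset V) (P : κ → Finset V) : ℝ :=
  (1 / (2 * protectedEdgeWeight P)) *
    ((∑ u, ∑ w, (#(C u ∩ P w) : ℝ) ^ 2)
      - (1 / (2 * protectedEdgeWeight P)) *
        ∑ u, (∑ w, (#(C u ∩ P w) : ℝ) * (#(P w) : ℝ)) ^ 2)

theorem fairnessModularity_eq_sum_cauchySchwarz_defect [Fintype ι] (C : ι → Finset V)
    {P : κ → Finset V} (hP : ∃ w, (P w).Nonempty) :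
    fairnessModularity C P = (1 / (2 * protectedEdgeWeight P) ^ 2) *
      ∑ u, ((∑ w, (#(C u ∩ P w) : ℝ) ^ 2) * (∑ w, (#(P w) : ℝ) ^ 2)
        - (∑ w, (#(C u ∩ P w) : ℝ) * (#(P w) : ℝ)) ^ 2) := by
  have hm : protectedEdgeWeight P ≠ 0 := (protectedEdgeWeight_pos hP).ne'
  rw [fairnessModularity, sum_sub_distrib, ← sum_mul, ← two_mul_protectedEdgeWeight]
  field_simp

theorem fairness_modularity_eq_zero_of_fair_general [Fintype V] [Fintype ι]
    {C : ι → Finset V} {P : κ → Finset V} (hC : ∀ u, (C u).Nonempty)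
    (hP : ∃ w, (P w).Nonempty) (hfair : IsFair C P) : fairnessModularity C P = 0 := by
  have defect_eq_zero (u : ι) :
      (∑ w, (#(C u ∩ P w) : ℝ) ^ 2) * (∑ w, (#(P w) : ℝ) ^ 2)
        - (∑ w, (#(C u ∩ P w) : ℝ) * (#(P w) : ℝ)) ^ 2 = 0 :=
    sub_eq_zero.mpr (sum_mul_sq_eq_sum_sq_mul_sum_sq_of_eq_mul
      fun w _ ↦ hfair.card_inter_eq_mul (hC u) w).symm
  rw [fairnessModularity_eq_sum_cauchySchwarz_defect C hP,
    sum_eq_zero fun u _ ↦ defect_eq_zero u, mul_zero]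

end FairnessModularity

/-- (Forward direction of Theorem 1.) If the community partition is fair, then Q^P = 0. -/
theorem fairness_modularity_eq_zero_of_fair
    {V : Type*} [Fintype V] [DecidableEq V]
    (n : ℕ) (hn : Fintype.card V = n) (hn1 : 1 ≤ n)
    (k r : ℕ) (C : Fin k → Finset V) (P : Fin r → Finset V)
    (hCne : ∀ u, (C u).Nonempty)
    (hCdisj : ∀ u u', u ≠ u' → Disjoint (C u) (C u'))
    (hCunion : ∀ v : V, ∃ u, v ∈ C u)
    (hPne : ∀ w, (P w).Nonempty)
    (hPdisj : ∀ w w', w ≠ w' → Disjoint (P w) (P w'))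
    (hPunion : ∀ v : V, ∃ w, v ∈ P w)
    (mP : ℝ) (hmP : mP = (1/2) * ∑ w, ((P w).card : ℝ)^2)
    (QP : ℝ)
    (hQP : QP = (1/(2*mP)) *
      ((∑ u, ∑ w, ((C u ∩ P w).card : ℝ)^2)
        - (1/(2*mP)) * ∑ u, (∑ w, ((C u ∩ P w).card : ℝ) * ((P w).card : ℝ))^2))
    (hfair : ∀ u w,
      ((C u ∩ P w).card : ℝ) / ((C u).card : ℝ) = ((P w).card : ℝ) / (n : ℝ)) :
    QP = 0 := by
  subst hn hmP hQP
  obtain ⟨v⟩ : Nonempty V := Fintype.card_pos_iff.mp hn1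
  exact fairness_modularity_eq_zero_of_fair_general hCne ((hPunion v).imp fun w _ ↦ hPne w) hfair
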